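/- arXiv:2305.13065 — 2 statements merged into one kernel-verified Lean document; each statement's English description precedes it below -/
import Mathlib

section
/- Assume the interpolatory quadrature at the nodes is exact to degree 2M−1, i.e. Σ_{m=0}^{M} w_m p(ξᵐ) = ∫₀¹ p(ξ) dξ for every polynomial p of degree ≤ 2M−1. Let φ̂⁰,…,φ̂ᴹ be any polynomials forming a basis of the real vector space of polynomials of degree at most M, and define (B_φ)_{ℓm} = φ̂ˡ(1)φ̂ᵐ(1) − ∫₀¹ (φ̂ˡ)′(ξ) φ̂ᵐ(ξ) dξ, (Λ_φ)_{ℓm} = φ̂ˡ(ξᵐ)·w_m, and the change-of-basis matrix H_{ℓm} = φ̂ᵐ(ξˡ). Then for every u_n ∈ ℝ^Q, Δt ∈ ℝ, every g : {0,…,M} → ℝ^Q, and every c ∈ (ℝ^Q)^{M+1}, setting vˡ = Σ_{m} H_{ℓm} cᵐ, the two ADER systems are equivalent: [for all ℓ: Σ_{m} (B_φ)_{ℓm} cᵐ = φ̂ˡ(0)·u_n + Δt Σ_{m} (Λ_φ)_{ℓm} gᵐ] holds if and only if [for all ℓ: Σ_{m} B_{ℓm} vᵐ = ψ̂ˡ(0)·u_n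 + Δt·w_ℓ·gˡ] holds. -/
/-!
Both systems say that the same linear functional of the test polynomial,
`p ↦ β(p, u_h) - p(0) u_n - Δt ∑ₘ p(ξᵐ) w_m gᵐ`, vanishes on a family of test polynomials, where
`β(p, q) = p(1) q(1) - ∫₀¹ p' q` and `u_h = ∑ₘ cᵐ φᵐ = ∑ₘ vᵐ ψᵐ` because `vᵐ` is the value of
`u_h` at the node `ξᵐ`. The two families span the same space, so the functional vanishes on one
exactly when it vanishes on the other.
-/

open Polynomial Module

theorem forall_apply_eq_iff_of_span_range_eq {R P V ι κ : Type*} [Semiring R]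
    [AddCommMonoid P] [Module R P] [AddCommMonoid V] [Module R V] {φ : ι → P} {ψ : κ → P}
    (hspan : Submodule.span R (Set.range φ) = Submodule.span R (Set.range ψ))
    (F G : P →ₗ[R] V) : (∀ i, F (φ i) = G (φ i)) ↔ ∀ k, F (ψ k) = G (ψ k) := by
  simpa only [hspan, LinearMap.eqOn_span_iff, Set.eqOn_range, funext_iff, Function.comp_apply]
    using (LinearMap.eqOn_span_iff (s := Set.range φ) (f := F) (g := G)).symm

section Galerkin

variable {R P V ι κ : Type*} [CommSemiring R] [AddCommMonoid P] [Module R P]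
  [AddCommMonoid V] [Module R V] [Fintype ι] [Fintype κ]

/-- The left-hand side of the Galerkin system of the bilinear form `β`, as a linear function of the
test element: `p ↦ β(p, ∑ₘ cₘ φₘ)`. The coefficients `cₘ` of the trial function are vectors in `V`,
to which `β` is extended by linearity. -/
def galerkinOperator (β : P →ₗ[R] P →ₗ[R] R) (φ : ι → P) (c : ι → V) : P →ₗ[R] V :=
  ∑ m, (β.flip (φ m)).smulRight (c m)

@[simp]
theorem galerkinOperator_apply (β : P →ₗ[R] P →ₗ[R] R) (φ : ι → P) (c : ι → V) (p : P) :
    galerkinOperator β φ c p = ∑ m, β p (φ m) • c m := by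
  simp [galerkinOperator]

theorem galerkinOperator_eq_of_eq_sum (β : P →ₗ[R] P →ₗ[R] R) {φ : ι → P} {ψ : κ → P}
    {H : Matrix κ ι R} (hφ : ∀ j, φ j = ∑ k, H k j • ψ k) (c : ι → V) :
    galerkinOperator β φ c = galerkinOperator β ψ fun k => ∑ j, H k j • c j := by
  ext p
  simp only [galerkinOperator_apply, hφ, map_sum, map_smul, smul_eq_mul, Finset.sum_smul,
    Finset.smul_sum, smul_smul]
  rw [Finset.sum_comm]
  simp only [mul_comm]

end Galerkin

theorem span_range_eq_degreeLT_of_linearIndependent {K ι : Type*} [DivisionRing K] [Fintype ι]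
    {φ : ι → K[X]} (hdeg : ∀ i, (φ i).degree < Fintype.card ι)
    (hli : LinearIndependent K φ) :
    Submodule.span K (Set.range φ) = degreeLT K (Fintype.card ι) := by
  have : FiniteDimensional K (degreeLT K (Fintype.card ι)) :=
    .of_basis (degreeLT.basis K (Fintype.card ι))
  apply Submodule.eq_of_le_of_finrank_eq
  · rw [Submodule.span_le, Set.range_subset_iff]
    exact fun i => mem_degreeLT.2 (hdeg i)
  · rw [finrank_span_eq_card hli, finrank_eq_card_basis (degreeLT.basis K (Fintype.card ι)),
      Fintype.card_fin]

section Lagrange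

variable {K ι : Type*} [Field K] [Fintype ι] [DecidableEq ι] {ξ : ι → K}

theorem eq_sum_eval_smul_lagrangeBasis (hξ : ξ.Injective) {p : K[X]}
    (hp : p.degree < Fintype.card ι) :
    p = ∑ i, p.eval (ξ i) • Lagrange.basis Finset.univ ξ i := by
  simpa only [Lagrange.interpolate_apply, ← smul_eq_C_mul]
    using Lagrange.eq_interpolate (s := Finset.univ) hξ.injOn hp

theorem eval_lagrangeBasis_univ (hξ : ξ.Injective) (i j : ι) :
    (Lagrange.basis Finset.univ ξ i).eval (ξ j) = if i = j then 1 else 0 := by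
  split_ifs with hij
  · rw [← hij, Lagrange.eval_basis_self hξ.injOn (Finset.mem_univ i)]
  · exact Lagrange.eval_basis_of_ne hij (Finset.mem_univ j)

theorem degree_lagrangeBasis_univ_lt (hξ : ξ.Injective) (i : ι) :
    (Lagrange.basis Finset.univ ξ i).degree < Fintype.card ι := by
  rw [Lagrange.degree_basis hξ.injOn (Finset.mem_univ i), Finset.card_univ]
  exact_mod_cast Nat.sub_lt (Fintype.card_pos_iff.2 ⟨i⟩) one_pos

theorem eq_lagrangeBasis_of_eval_eq_ite (hξ : ξ.Injective) {ψ : ι → K[X]}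
    (hdeg : ∀ i, (ψ i).degree < Fintype.card ι)
    (heval : ∀ i j, (ψ i).eval (ξ j) = if i = j then 1 else 0) :
    ψ = Lagrange.basis Finset.univ ξ := by
  funext i
  refine eq_of_degrees_lt_of_eval_index_eq Finset.univ hξ.injOn (hdeg i)
    (degree_lagrangeBasis_univ_lt hξ i) fun j _ => ?_
  rw [heval, eval_lagrangeBasis_univ hξ]

theorem span_range_lagrangeBasis (hξ : ξ.Injective) :
    Submodule.span K (Set.range (Lagrange.basis Finset.univ ξ)) = degreeLT K (Fintype.card ι) := by
  apply le_antisymm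
  · rw [Submodule.span_le, Set.range_subset_iff]
    exact fun i => mem_degreeLT.2 (degree_lagrangeBasis_univ_lt hξ i)
  · intro p hp
    rw [eq_sum_eval_smul_lagrangeBasis hξ (mem_degreeLT.1 hp)]
    exact Submodule.sum_smul_mem _ _ fun i _ => Submodule.subset_span (Set.mem_range_self i)

end Lagrange

section NodalLoad

variable {R V ι : Type*} [CommSemiring R] [AddCommMonoid V] [Module R V] [Fintype ι]

/-- The right-hand side of the ADER system, as a linear function of the test polynomial: the value
at the initial time `x₀` against the data `u`, plus the nodal quadrature, with nodes `ξ` and weights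
`w`, of the source values `g` scaled by the time step `Δt`. -/
noncomputable def nodalLoad (x₀ : R) (u : V) (Δt : R) (ξ w : ι → R) (g : ι → V) : R[X] →ₗ[R] V :=
  (leval x₀).smulRight u + Δt • ∑ m, (leval (ξ m)).smulRight (w m • g m)

@[simp]
theorem nodalLoad_apply (x₀ : R) (u : V) (Δt : R) (ξ w : ι → R) (g : ι → V) (p : R[X]) :
    nodalLoad x₀ u Δt ξ w g p =
      p.eval x₀ • u + Δt • ∑ m, (p.eval (ξ m) * w m) • g m := by
  simp [nodalLoad, leval_apply, smul_smul]

end NodalLoad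

theorem ader_arbitrary_basis_equiv_nodal_general {K V ι : Type*} [Field K] [AddCommMonoid V]
    [Module K V] [Fintype ι] [DecidableEq ι] (β : K[X] →ₗ[K] K[X] →ₗ[K] K)
    {ξ : ι → K} (hξ : ξ.Injective) {φ : ι → K[X]} (hφdeg : ∀ i, (φ i).degree < Fintype.card ι)
    (hφli : LinearIndependent K φ) {ψ : ι → K[X]}
    (hψdeg : ∀ i, (ψ i).degree < Fintype.card ι)
    (hψeval : ∀ i j, (ψ i).eval (ξ j) = if i = j then 1 else 0)
    (x₀ : K) (u : V) (Δt : K) (w : ι → K) (g c : ι → V) :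
    (∀ l, ∑ m, β (φ l) (φ m) • c m =
      (φ l).eval x₀ • u + Δt • ∑ m, ((φ l).eval (ξ m) * w m) • g m) ↔
    ∀ l, ∑ m, β (ψ l) (ψ m) • ∑ j, (φ j).eval (ξ m) • c j =
      (ψ l).eval x₀ • u + (Δt * w l) • g l := by
  obtain rfl := eq_lagrangeBasis_of_eval_eq_ite hξ hψdeg hψeval
  have hspan := (span_range_eq_degreeLT_of_linearIndependent hφdeg hφli).trans
    (span_range_lagrangeBasis hξ).symm
  have htrial := galerkinOperator_eq_of_eq_sum β
    (H := .of fun k j => (φ j).eval (ξ k))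
    (fun j => eq_sum_eval_smul_lagrangeBasis hξ (hφdeg j)) c
  have htest := forall_apply_eq_iff_of_span_range_eq hspan
    (galerkinOperator β φ c) (nodalLoad x₀ u Δt ξ w g)
  simp only [galerkinOperator_apply, nodalLoad_apply] at htest
  rw [htest]
  refine forall_congr' fun l => ?_
  rw [← galerkinOperator_apply, htrial]
  simp [hψeval, smul_smul]

theorem intervalIntegrable_eval_mul_eval {μ : MeasureTheory.Measure ℝ}
    [MeasureTheory.IsLocallyFiniteMeasure μ] (p q : ℝ[X]) (a b : ℝ) :
    IntervalIntegrable (fun x => p.eval x * q.eval x) μ a b :=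
  (p.continuous.mul q.continuous).intervalIntegrable a b

/-- The bilinear form `(p, q) ↦ p(1) q(1) - ∫₀¹ p' q` of the ADER discretisation, that is, of the
time derivative of the trial function `q` tested against `p` and integrated by parts, with the
boundary term at `0` moved to the right-hand side of the system. -/
noncomputable def aderForm : ℝ[X] →ₗ[ℝ] ℝ[X] →ₗ[ℝ] ℝ :=
  LinearMap.mk₂ ℝ
    (fun p q => p.eval 1 * q.eval 1 - ∫ x in (0 : ℝ)..1, p.derivative.eval x * q.eval x)
    (fun p₁ p₂ q => by
      simp only [derivative_add, eval_add, add_mul]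
      rw [intervalIntegral.integral_add (intervalIntegrable_eval_mul_eval ..)
        (intervalIntegrable_eval_mul_eval ..)]
      ring)
    (fun a p q => by
      simp only [derivative_smul, eval_smul, smul_eq_mul, mul_assoc,
        intervalIntegral.integral_const_mul]
      ring)
    (fun p q₁ q₂ => by
      simp only [eval_add, mul_add]
      rw [intervalIntegral.integral_add (intervalIntegrable_eval_mul_eval ..)
        (intervalIntegrable_eval_mul_eval ..)]
      ring)
    (fun a p q => by
      simp only [eval_smul, smul_eq_mul, mul_left_comm _ a,
        intervalIntegral.integral_const_mul]
      ring)

theorem aderForm_apply (p q : ℝ[X]) :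
    aderForm p q =
      p.eval 1 * q.eval 1 - ∫ x in (0 : ℝ)..1, p.derivative.eval x * q.eval x :=
  rfl

theorem degree_lt_card_fin_of_natDegree_le {R : Type*} [Semiring R] {M : ℕ} {p : R[X]}
    (hp : p.natDegree ≤ M) : p.degree < Fintype.card (Fin (M + 1)) := by
  rw [Fintype.card_fin]
  exact (degree_le_of_natDegree_le hp).trans_lt (by exact_mod_cast M.lt_succ_self)

/-- Equivalence between the ADER system for an arbitrary polynomial basis (with nodal
quadrature of exactness 2M−1) and the ADER system for the nodal Lagrange basis. -/
theorem ader_arbitrary_basis_equiv_nodal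
    (M : ℕ) (hM : 1 ≤ M)
    (ξ : Fin (M + 1) → ℝ)
    (hξ01 : ∀ m, ξ m ∈ Set.Icc (0 : ℝ) 1)
    (hξmono : StrictMono ξ)
    (ψ : Fin (M + 1) → Polynomial ℝ)
    (hψdeg : ∀ l, (ψ l).natDegree ≤ M)
    (hψeval : ∀ l m, (ψ l).eval (ξ m) = if l = m then 1 else 0)
    (Bmat Lam : Matrix (Fin (M + 1)) (Fin (M + 1)) ℝ)
    (hB : ∀ l m, Bmat l m = (ψ l).eval 1 * (ψ m).eval 1 -
        ∫ x in (0 : ℝ)..1, (ψ l).derivative.eval x * (ψ m).eval x)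
    (hLam : ∀ l m, Lam l m = ∫ x in (0 : ℝ)..1, (ψ l).eval x * (ψ m).eval x)
    (w : Fin (M + 1) → ℝ)
    (hw : ∀ m, w m = ∫ x in (0 : ℝ)..1, (ψ m).eval x)
    (hquad : ∀ p : Polynomial ℝ, p.natDegree ≤ 2 * M - 1 →
      ∑ m, w m * p.eval (ξ m) = ∫ x in (0 : ℝ)..1, p.eval x)
    (φ : Fin (M + 1) → Polynomial ℝ)
    (hφdeg : ∀ m, (φ m).natDegree ≤ M)
    (hφli : LinearIndependent ℝ φ)
    (Bphi Lamphi : Matrix (Fin (M + 1)) (Fin (M + 1)) ℝ)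
    (hBphi : ∀ l m, Bphi l m = (φ l).eval 1 * (φ m).eval 1 -
        ∫ x in (0 : ℝ)..1, (φ l).derivative.eval x * (φ m).eval x)
    (hLamphi : ∀ l m, Lamphi l m = (φ l).eval (ξ m) * w m)
    (Hmat : Matrix (Fin (M + 1)) (Fin (M + 1)) ℝ)
    (hH : ∀ l m, Hmat l m = (φ m).eval (ξ l))
    (Q : ℕ) (un : Fin Q → ℝ) (Δt : ℝ)
    (g cvec v : Fin (M + 1) → Fin Q → ℝ)
    (hv : ∀ l, v l = ∑ m, Hmat l m • cvec m) :
    (∀ l, ∑ m, Bphi l m • cvec m = (φ l).eval 0 • un + Δt • ∑ m, Lamphi l m • g m) ↔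
    (∀ l, ∑ m, Bmat l m • v m = (ψ l).eval 0 • un + (Δt * w l) • g l) := by
  simpa only [hBphi, hLamphi, hB, hv, hH, aderForm_apply] using
    ader_arbitrary_basis_equiv_nodal_general aderForm hξmono.injective
      (fun l => degree_lt_card_fin_of_natDegree_le (hφdeg l)) hφli
      (fun l => degree_lt_card_fin_of_natDegree_le (hψdeg l)) hψeval 0 un Δt w g cvec
end

section
/- Assume additionally that ξ⁰ = 0 and that B is invertible, and let Λ_W = diag(w₀,…,w_M) be the diagonal matrix of weights (the quadrature-evaluated mass matrix when the quadrature nodes coincide with the subtimenodes, as for Gauss–Lobatto points). Then every entry of the 0-th column of the Runge–Kutta matrix A = B⁻¹Λ_W equals w₀: A_{i0} = w₀ for all i ∈ {0,…,M}. Equivalently, for every ℓ: (Λ_W)_{ℓ0} = w₀·Σ_{m=0}^{M} B_{ℓm}. This is the Lobatto IIIC defining condition a_{i,0} = b₀. -/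
/-!
The matrix `B` represents the bilinear form `(p, q) ↦ p(1) q(1) - ∫₀¹ p' q`, and the Lagrange
polynomials sum to `1`. Hence the `l`-th row sum of `B` is the value of this form at `(ψˡ, 1)`,
which is `ψˡ(1) - ∫₀¹ (ψˡ)' = ψˡ(0)`. When the first node is `0`, this says that `B` maps the
constant vector `1` to the first unit vector, so the first column of `B⁻¹` is constant equal to `1`.
-/

section

open Matrix Polynomial

theorem sum_eq_one_of_eval_eq_ite {ι R : Type*} [Fintype ι] [DecidableEq ι] [Nonempty ι]
    [CommRing R] [IsDomain R] {x : ι → R} {ψ : ι → R[X]}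
    (hdeg : ∀ i, (ψ i).natDegree < Fintype.card ι)
    (heval : ∀ i j, (ψ i).eval (x j) = if i = j then 1 else 0) :
    ∑ i, ψ i = 1 := by
  have hx : Function.Injective x := fun i j hij ↦ by
    simpa [heval] using congrArg (ψ i).eval hij
  refine eq_of_natDegree_lt_card_of_eval_eq _ _ hx (fun j ↦ ?_) (max_lt ?_ ?_)
  · simp [eval_finsetSum, heval]
  · exact Nat.lt_of_le_pred Fintype.card_pos <|
      natDegree_sum_le_of_forall_le _ _ fun i _ ↦ Nat.le_pred_of_lt (hdeg i)
  · simpa only [natDegree_one] using Fintype.card_pos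

theorem integral_eval_derivative (p : ℝ[X]) (a b : ℝ) :
    ∫ x in a..b, p.derivative.eval x = p.eval b - p.eval a :=
  intervalIntegral.integral_eq_sub_of_hasDerivAt (fun x _ ↦ p.hasDerivAt x)
    (p.derivative.continuous.intervalIntegrable a b)

/-- The ADER matrix `B` of a family of polynomials on the interval with endpoints `a` and `b`: the
weak form of `d/dx` tested against the family, without the boundary term at `a`, where the scheme
inserts the initial value. The paper's matrix is the case `a = 0`, `b = 1` of a Lagrange basis. -/
noncomputable def aderMatrix {ι : Type*} (a b : ℝ) (ψ : ι → ℝ[X]) : Matrix ι ι ℝ :=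
  .of fun l m ↦ (ψ l).eval b * (ψ m).eval b - ∫ x in a..b, (ψ l).derivative.eval x * (ψ m).eval x

theorem sum_aderMatrix_apply {ι : Type*} [Fintype ι] {ψ : ι → ℝ[X]} (hψ : ∑ m, ψ m = 1)
    (a b : ℝ) (l : ι) : ∑ m, aderMatrix a b ψ l m = (ψ l).eval a := by
  have sum_eval (x : ℝ) : ∑ m, (ψ m).eval x = 1 := by
    rw [← eval_finsetSum, hψ, eval_one]
  have integrable (m : ι) : IntervalIntegrable (fun x ↦ (ψ l).derivative.eval x * (ψ m).eval x)
      MeasureTheory.volume a b :=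
    ((ψ l).derivative.continuous.mul (ψ m).continuous).intervalIntegrable a b
  calc ∑ m, aderMatrix a b ψ l m
      = (ψ l).eval b * ∑ m, (ψ m).eval b -
          ∫ x in a..b, (ψ l).derivative.eval x * ∑ m, (ψ m).eval x := by
        simp only [aderMatrix, of_apply, Finset.sum_sub_distrib, Finset.mul_sum,
          intervalIntegral.integral_finsetSum fun m _ ↦ integrable m]
    _ = (ψ l).eval b - ∫ x in a..b, (ψ l).derivative.eval x := by
        simp only [sum_eval, mul_one]
    _ = (ψ l).eval a := by
        rw [integral_eval_derivative, sub_sub_cancel]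

theorem inv_mul_diagonal_apply_of_mulVec_eq_single {n R : Type*} [Fintype n] [DecidableEq n]
    [CommRing R] {B : Matrix n n R} (hB : IsUnit B.det) {v : n → R} {j : n}
    (hv : B *ᵥ v = Pi.single j 1) (d : n → R) (i : n) :
    (B⁻¹ * diagonal d) i j = v i * d j := by
  have hcol : B⁻¹.col j = v := by
    rw [← mulVec_single_one, ← hv, mulVec_mulVec, nonsing_inv_mul B hB, one_mulVec]
  rw [mul_diagonal, ← hcol, col_apply]

theorem ader_lobatto_IIIC_first_column_general {ι : Type*} [Fintype ι] [DecidableEq ι]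
    {ψ : ι → ℝ[X]} (hsum : ∑ m, ψ m = 1) {a : ℝ} {j : ι}
    (heval : ∀ l, (ψ l).eval a = if l = j then 1 else 0) (b : ℝ) (w : ι → ℝ) :
    (IsUnit (aderMatrix a b ψ).det → ∀ i, ((aderMatrix a b ψ)⁻¹ * diagonal w) i j = w j) ∧
    ∀ l, diagonal w l j = w j * ∑ m, aderMatrix a b ψ l m := by
  have hrow (l : ι) : ∑ m, aderMatrix a b ψ l m = if l = j then 1 else 0 := by
    rw [sum_aderMatrix_apply hsum, heval]
  have hB : aderMatrix a b ψ *ᵥ 1 = Pi.single j 1 := by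
    ext l
    simp only [mulVec, dotProduct_one, hrow, Pi.single_apply]
  refine ⟨fun hdet i ↦ ?_, fun l ↦ ?_⟩
  · rw [inv_mul_diagonal_apply_of_mulVec_eq_single hdet hB, Pi.one_apply, one_mul]
  · obtain rfl | hl := eq_or_ne l j
    · rw [diagonal_apply_eq, hrow, if_pos rfl, mul_one]
    · rw [diagonal_apply_ne _ hl, hrow, if_neg hl, mul_zero]

end

/-- Lobatto IIIC defining condition a_{i,0} = b₀ for the ADER Runge–Kutta matrix
A = B⁻¹·diag(w) when ξ⁰ = 0: every entry of the 0-th column of A equals w₀; equivalently,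
(Λ_W)_{ℓ0} = w₀·Σₘ B_{ℓm}. -/
theorem ader_lobatto_IIIC_first_column
    (M : ℕ) (hM : 1 ≤ M)
    (ξ : Fin (M + 1) → ℝ)
    (hξ01 : ∀ m, ξ m ∈ Set.Icc (0 : ℝ) 1)
    (hξmono : StrictMono ξ)
    (ψ : Fin (M + 1) → Polynomial ℝ)
    (hψdeg : ∀ l, (ψ l).natDegree ≤ M)
    (hψeval : ∀ l m, (ψ l).eval (ξ m) = if l = m then 1 else 0)
    (Bmat Lam : Matrix (Fin (M + 1)) (Fin (M + 1)) ℝ)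
    (hB : ∀ l m, Bmat l m = (ψ l).eval 1 * (ψ m).eval 1 -
        ∫ x in (0 : ℝ)..1, (ψ l).derivative.eval x * (ψ m).eval x)
    (hLam : ∀ l m, Lam l m = ∫ x in (0 : ℝ)..1, (ψ l).eval x * (ψ m).eval x)
    (w : Fin (M + 1) → ℝ)
    (hw : ∀ m, w m = ∫ x in (0 : ℝ)..1, (ψ m).eval x)
    (hξ0 : ξ 0 = 0)
    (hBinv : IsUnit Bmat.det) :
    (∀ i, (Bmat⁻¹ * Matrix.diagonal w) i 0 = w 0) ∧
    (∀ l, Matrix.diagonal w l 0 = w 0 * ∑ m, Bmat l m) := by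
  obtain rfl : Bmat = aderMatrix 0 1 ψ := Matrix.ext hB
  have hsum : ∑ m, ψ m = 1 := sum_eq_one_of_eval_eq_ite (x := ξ)
    (fun l ↦ by simpa only [Fintype.card_fin, Nat.lt_succ_iff] using hψdeg l) hψeval
  exact (ader_lobatto_IIIC_first_column_general hsum (fun l ↦ hξ0 ▸ hψeval l 0) 1 w).imp_left
    (· hBinv)
end
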